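/- Theorem 1(iv) of Turyn and Storer is false: there exist n, a binary sequence x of length n, and positive integers t and p with p > 1, 2t+1 ≤ n, x_i = 1 for 1 ≤ i ≤ p, x_{p+1} = -1, such that x satisfies equation (k) for all 1 ≤ k ≤ t, and yet there exists an integer k with 1 ≤ k ≤ t/p for which the derived sequence z defined by z_j = x_{p(j-1)+1} does not satisfy equation (k). -/

import Mathlib

/-- A binary sequence `x` (1-indexed) satisfies equation (k) if
`∑_{i=1}^{k} (-1)^{i+1} x_i x_{2k+2-i} = (1+(-1)^{k+1})/2`. -/
def SatisfiesEqn (x : ℕ → ℤ) (k : ℕ) : Prop :=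
  ∑ i ∈ Finset.Icc 1 k, (-1 : ℤ) ^ (i + 1) * x i * x (2 * k + 2 - i)
    = (1 + (-1 : ℤ) ^ (k + 1)) / 2

/-!
Let `G(X) = ∑ x_{i+1} X ^ i`. The coefficient of `X ^ (2k)` in `G(X) G(-X)` is twice the sum in
equation (k) plus `(-1) ^ k`, so equation (k) says that this coefficient is `1`. Writing
`G = Y / (1 - X)`, where `Y` records the sign changes of `x`, the equations up to `t` hold as soon
as `Y(X) Y(-X) ≡ 1` modulo `X ^ (2t + 2)`.

If every exponent of `Y` were a multiple of `p`, then `Y(X) = W(X ^ p)` with `W` belonging to `z`,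
and the congruence would descend to `W`. For odd `p`, the series
`Y = 1 - 2 (X ^ p - X ^ (2p) + X ^ (4p) - X ^ (5p) + X ^ (5p + 2))` satisfies the congruence with
`t = 3p`, but passing to `z` rounds its last sign change up to `6p`, and this breaks equation (3).
-/

open PowerSeries

theorem sum_range_two_mul_add_one_of_symm {M : Type*} [AddCommMonoid M] {f : ℕ → M} {k : ℕ}
    (hf : ∀ i < k, f (2 * k - i) = f i) :
    ∑ i ∈ Finset.range (2 * k + 1), f i = 2 • ∑ i ∈ Finset.range k, f i + f k := by
  have upper_half : ∑ i ∈ Finset.range k, f (k + 1 + i) = ∑ i ∈ Finset.range k, f i := by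
    rw [← Finset.sum_range_reflect]
    refine Finset.sum_congr rfl fun i hi ↦ ?_
    rw [Finset.mem_range] at hi
    rw [← hf i hi]
    congr 1
    omega
  rw [show 2 * k + 1 = k + 1 + k by ring, Finset.sum_range_add, upper_half,
    Finset.sum_range_succ, two_nsmul, add_right_comm]

section CommRing

variable {R : Type*} [CommRing R]

theorem coeff_mul_evalNegHom (φ ψ : R⟦X⟧) (n : ℕ) :
    coeff n (φ * evalNegHom ψ) =
      ∑ i ∈ Finset.range (n + 1), coeff i φ * ((-1) ^ (n - i) * coeff (n - i) ψ) := by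
  simp only [coeff_mul, evalNegHom, coeff_rescale]
  exact Finset.Nat.sum_antidiagonal_eq_sum_range_succ
    (fun i j ↦ coeff i φ * ((-1) ^ j * coeff j ψ)) n

theorem coeff_two_mul_mul_evalNegHom_self (φ : R⟦X⟧) (k : ℕ) :
    coeff (2 * k) (φ * evalNegHom φ) =
      2 * ∑ i ∈ Finset.range k, (-1) ^ i * coeff i φ * coeff (2 * k - i) φ +
        (-1) ^ k * coeff k φ ^ 2 := by
  have neg_one_pow_sub {i : ℕ} (hi : i ≤ 2 * k) : (-1 : R) ^ (2 * k - i) = (-1) ^ i :=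
    neg_one_pow_congr (by grind)
  have summand {i : ℕ} (hi : i ≤ 2 * k) :
      coeff i φ * ((-1) ^ (2 * k - i) * coeff (2 * k - i) φ) =
        (-1) ^ i * coeff i φ * coeff (2 * k - i) φ := by
    rw [neg_one_pow_sub hi, mul_left_comm, mul_assoc]
  rw [coeff_mul_evalNegHom,
    Finset.sum_congr rfl fun i hi ↦ summand (Finset.mem_range_succ_iff.mp hi),
    sum_range_two_mul_add_one_of_symm, nsmul_eq_mul, Nat.cast_ofNat,
    show 2 * k - k = k by omega, pow_two, mul_assoc _ (coeff k φ)]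
  intro i hi
  rw [neg_one_pow_sub (by omega), Nat.sub_sub_self (by omega), mul_right_comm]

theorem coeff_two_mul_mk_one_mul_evalNegHom_mk_one (k : ℕ) :
    coeff (2 * k) (mk 1 * evalNegHom (mk 1) : R⟦X⟧) = 1 := by
  have value : coeff (2 * k) (mk 1 * evalNegHom (mk 1) : R⟦X⟧) =
      2 * ∑ i ∈ Finset.range k, (-1) ^ i + (-1) ^ k := by
    simpa using coeff_two_mul_mul_evalNegHom_self (mk 1 : R⟦X⟧) k
  linear_combination value + mul_neg_geom_sum (-1 : R) k

theorem coeff_two_mul_mk_one_mul_evalNegHom_of_X_pow_dvd {Y : R⟦X⟧} {m k : ℕ}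
    (hY : X ^ m ∣ Y * evalNegHom Y - 1) (hk : 2 * k < m) :
    coeff (2 * k) (mk 1 * Y * evalNegHom (mk 1 * Y)) = 1 := by
  have expansion : mk 1 * Y * evalNegHom (mk 1 * Y) =
      mk 1 * evalNegHom (mk 1) + mk 1 * evalNegHom (mk 1) * (Y * evalNegHom Y - 1) := by
    rw [map_mul]
    ring
  rw [expansion, map_add, coeff_two_mul_mk_one_mul_evalNegHom_mk_one,
    X_pow_dvd_iff.mp (hY.mul_left _) _ hk, add_zero]

end CommRing

/-- The generating series `∑ x_{i+1} X ^ i` of a 1-indexed sequence `x`; the value `x 0`, which has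
no meaning for `x`, does not enter. -/
def generatingSeries (x : ℕ → ℤ) : ℤ⟦X⟧ :=
  mk fun i ↦ x (i + 1)

theorem satisfiesEqn_iff_coeff_eq_one {x : ℕ → ℤ} {k : ℕ} (hx : x (k + 1) ^ 2 = 1) :
    SatisfiesEqn x k ↔
      coeff (2 * k) (generatingSeries x * evalNegHom (generatingSeries x)) = 1 := by
  have reindex : ∑ i ∈ Finset.Icc 1 k, (-1 : ℤ) ^ (i + 1) * x i * x (2 * k + 2 - i) =
      ∑ i ∈ Finset.range k, (-1) ^ i * x (i + 1) * x (2 * k - i + 1) := by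
    rw [Finset.range_eq_Ico, ← Finset.Ico_add_one_right_eq_Icc, ← Finset.sum_Ico_add' _ 0 k 1]
    refine Finset.sum_congr rfl fun i hi ↦ ?_
    rw [Finset.mem_Ico] at hi
    rw [show 2 * k + 2 - (i + 1) = 2 * k - i + 1 by omega, pow_succ, pow_succ, mul_neg_one,
      mul_neg_one, neg_neg]
  simp only [SatisfiesEqn, reindex, coeff_two_mul_mul_evalNegHom_self, generatingSeries,
    coeff_mk, hx]
  rcases neg_one_pow_eq_or ℤ k with h | h <;> rw [pow_succ, h] <;> omega

theorem satisfiesEqn_of_X_pow_dvd {x : ℕ → ℤ} {Y : ℤ⟦X⟧} {m k : ℕ} (hx : x (k + 1) ^ 2 = 1)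
    (hxY : generatingSeries x = mk 1 * Y) (hY : X ^ m ∣ Y * evalNegHom Y - 1)
    (hk : 2 * k < m) : SatisfiesEqn x k := by
  rw [satisfiesEqn_iff_coeff_eq_one hx, hxY]
  exact coeff_two_mul_mk_one_mul_evalNegHom_of_X_pow_dvd hY hk

theorem satisfiesEqn_three_iff (x : ℕ → ℤ) :
    SatisfiesEqn x 3 ↔ x 1 * x 7 - x 2 * x 6 + x 3 * x 5 = 1 := by
  norm_num [SatisfiesEqn, Finset.sum_Icc_succ_top, sub_eq_add_neg]

/-- The counterexample to Theorem 1(iv) for an odd `p > 1`, continued to an infinite sequence: its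
runs, alternately of `1` and `-1`, have lengths `p, p, 2p, p, 2, ∞`. -/
def turynStorerSeq (p i : ℕ) : ℤ :=
  if (p < i ∧ i ≤ 2 * p) ∨ (4 * p < i ∧ i ≤ 5 * p) ∨ 5 * p + 2 < i then -1 else 1

/-- The series of sign changes of `turynStorerSeq p`: the coefficient of `X ^ i` is `x_{i+1} - x_i`
for `i ≥ 1`, and `x_1` for `i = 0`. -/
noncomputable def signChangeSeries (p : ℕ) : ℤ⟦X⟧ :=
  1 - 2 * (X ^ p - X ^ (2 * p) + X ^ (4 * p) - X ^ (5 * p) + X ^ (5 * p + 2))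

theorem turynStorerSeq_eq_one_or_eq_neg_one (p i : ℕ) :
    turynStorerSeq p i = 1 ∨ turynStorerSeq p i = -1 := by
  unfold turynStorerSeq
  split_ifs <;> simp

theorem generatingSeries_turynStorerSeq (p : ℕ) :
    generatingSeries (turynStorerSeq p) = mk 1 * signChangeSeries p := by
  ext n
  simp only [generatingSeries, turynStorerSeq, signChangeSeries, coeff_mk, two_mul, mul_add,
    mul_sub, mul_one, map_add, map_sub, coeff_mul_X_pow', Pi.one_apply]
  grind

theorem evalNegHom_signChangeSeries {p : ℕ} (hp : Odd p) :
    evalNegHom (signChangeSeries p) =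
      1 - 2 * (-X ^ p - X ^ (2 * p) + X ^ (4 * p) + X ^ (5 * p) - X ^ (5 * p + 2)) := by
  have odd_five_mul : Odd (5 * p) := Odd.mul (by decide) hp
  have even_four_mul : Even (4 * p) := Even.mul_right (by decide) p
  simp only [signChangeSeries, map_sub, map_add, map_mul, map_pow, map_one, map_ofNat evalNegHom,
    evalNegHom_X, hp.neg_pow, (even_two_mul p).neg_pow, even_four_mul.neg_pow,
    odd_five_mul.neg_pow, (odd_five_mul.add_even even_two).neg_pow, sub_neg_eq_add,
    ← sub_eq_add_neg]

theorem X_pow_dvd_signChangeSeries_mul_evalNegHom_sub_one {p : ℕ} (hp : Odd p) :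
    X ^ (6 * p + 2) ∣ signChangeSeries p * evalNegHom (signChangeSeries p) - 1 := by
  rw [evalNegHom_signChangeSeries hp, signChangeSeries]
  obtain ⟨q, rfl⟩ := hp
  exact ⟨4 * X ^ (4 * q) - 8 - 4 * X ^ (8 * q + 2) * (1 - X ^ 2) ^ 2, by ring⟩

theorem satisfiesEqn_turynStorerSeq {p k : ℕ} (hp : Odd p) (hk : k ≤ 3 * p) :
    SatisfiesEqn (turynStorerSeq p) k :=
  satisfiesEqn_of_X_pow_dvd
    (sq_eq_one_iff.mpr (turynStorerSeq_eq_one_or_eq_neg_one p (k + 1)))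
    (generatingSeries_turynStorerSeq p) (X_pow_dvd_signChangeSeries_mul_evalNegHom_sub_one hp)
    (by omega)

theorem not_satisfiesEqn_three_turynStorerSeq_derived {p : ℕ} (hp : 1 < p) :
    ¬ SatisfiesEqn (fun j ↦ turynStorerSeq p (p * (j - 1) + 1)) 3 := by
  simp only [satisfiesEqn_three_iff, turynStorerSeq]
  grind

theorem turyn_storer_theorem_one_iv_is_false_general {p : ℕ} (hp_odd : Odd p) (hp : 1 < p) :
    ∃ (n : ℕ) (x : ℕ → ℤ) (t : ℕ),
      1 ≤ t ∧ 2 * t + 1 ≤ n ∧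
      (∀ i : ℕ, 1 ≤ i → i ≤ n → x i = 1 ∨ x i = -1) ∧
      (∀ i : ℕ, 1 ≤ i → i ≤ p → x i = 1) ∧
      x (p + 1) = -1 ∧
      (∀ k : ℕ, 1 ≤ k → k ≤ t → SatisfiesEqn x k) ∧
      ∃ k : ℕ, 1 ≤ k ∧ (k : ℚ) ≤ (t : ℚ) / (p : ℚ) ∧
        ¬ SatisfiesEqn (fun j => x (p * (j - 1) + 1)) k := by
  have initial_run (i : ℕ) (hi : i ≤ p) : turynStorerSeq p i = 1 := if_neg (by omega)
  have first_sign_change : turynStorerSeq p (p + 1) = -1 := if_pos (by omega)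
  have three_le : ((3 : ℕ) : ℚ) ≤ ((3 * p : ℕ) : ℚ) / p := by
    rw [Nat.cast_mul, mul_div_cancel_right₀ _ (by positivity)]
  exact ⟨6 * p + 1, turynStorerSeq p, 3 * p, by omega, by omega,
    fun i _ _ ↦ turynStorerSeq_eq_one_or_eq_neg_one p i, fun i _ ↦ initial_run i,
    first_sign_change, fun k _ ↦ satisfiesEqn_turynStorerSeq hp_odd,
    3, by norm_num, three_le, not_satisfiesEqn_three_turynStorerSeq_derived hp⟩

/-- Theorem 1(iv) of Turyn and Storer is false: there exist a length `n`, a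
binary sequence `x` of length `n`, and positive integers `t` and `p` with
`p > 1`, `2t+1 ≤ n`, `x_i = 1` for `1 ≤ i ≤ p`, `x_{p+1} = -1`, such that `x`
satisfies equation (k) for all `1 ≤ k ≤ t`, and yet for some `k` with
`1 ≤ k ≤ t/p` the derived sequence `z_j = x_{p(j-1)+1}` does not satisfy
equation (k). -/
theorem turyn_storer_theorem_one_iv_is_false :
    ∃ (n : ℕ) (x : ℕ → ℤ) (t p : ℕ),
      1 ≤ t ∧ 1 < p ∧ 2 * t + 1 ≤ n ∧
      (∀ i : ℕ, 1 ≤ i → i ≤ n → x i = 1 ∨ x i = -1) ∧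
      (∀ i : ℕ, 1 ≤ i → i ≤ p → x i = 1) ∧
      x (p + 1) = -1 ∧
      (∀ k : ℕ, 1 ≤ k → k ≤ t → SatisfiesEqn x k) ∧
      ∃ k : ℕ, 1 ≤ k ∧ (k : ℚ) ≤ (t : ℚ) / (p : ℚ) ∧
        ¬ SatisfiesEqn (fun j => x (p * (j - 1) + 1)) k := by
  obtain ⟨n, x, t, ht, hx⟩ :=
    turyn_storer_theorem_one_iv_is_false_general (p := 3) (by decide) (by norm_num)
  exact ⟨n, x, t, 3, ht, by norm_num, hx⟩
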